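/- (Theorem 2, consistency against fixed alternatives.) Let q ≥ 2 and let θ̂_n = (θ̂_{n,1}, θ̂_{n,0,1}, …, θ̂_{n,0,q}) be random vectors in ℝ^{q+1}. Let θ_1, θ_0 ∈ ℝ with θ_1 > θ_0, let σ > 0 and σ_1, …, σ_q ≥ 0 with at most one σ_k = 0, and suppose √n (θ̂_{n,1} − θ_1, θ̂_{n,0,1} − θ_0, …, θ̂_{n,0,q} − θ_0) converges in distribution to the normal law N(0, diag(σ², σ_1², …, σ_q²)) on ℝ^{q+1}. Then for every w ∈ (0,1), E φ(θ̂_n, w) → 1 as n → ∞. -/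

import Mathlib

/-!
The entries of `S` and of its decreasing rearrangement have the same sum, so `T` compares the two
vectors through the sum of their first two entries alone. Hence the test rejects exactly when the
two treated entries form a pair of largest sum among all pairs of entries of `S`.

At a fixed alternative both treated entries of `S(θ, w)` are strictly larger than every control
entry, and this persists on a neighbourhood of `θ`. Slutsky's theorem, applied to
`(√n)⁻¹ → 0` and `√n (θ̂ₙ - θ)`, shows that `θ̂ₙ` converges to `θ` in probability, so it lies in
that neighbourhood with probability tending to one.
-/

open MeasureTheory ProbabilityTheory Filter Set

noncomputable section

/-- Standard normal cumulative distribution function `Φ`. -/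
def Phi (x : ℝ) : ℝ := ((gaussianReal 0 1) (Set.Iic x)).toReal

/-- Standard normal density `ϕ`. -/
def stdNormalPDF (y : ℝ) : ℝ := gaussianPDFReal 0 1 y

/-- Mean of the `q` control coordinates of `x = (x₁, x₀₁, …, x₀q)`. -/
def xbar (q : ℕ) (x : Fin (q + 1) → ℝ) : ℝ := (∑ k : Fin q, x k.succ) / q

/-- The weighted, recentered vector `S(x, w)`. -/
def Svec (q : ℕ) (w : ℝ) (x : Fin (q + 1) → ℝ) : Fin (q + 2) → ℝ := fun j =>
  if j.val = 0 then (1 + w) * (x 0 - xbar q x)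
  else if j.val = 1 then (1 - w) * (x 0 - xbar q x)
  else x ⟨j.val - 1, by have := j.isLt; omega⟩ - xbar q x

/-- The decreasing rearrangement `s^▽` of a tuple `s`. -/
def rearr {n : ℕ} (s : Fin n → ℝ) : Fin n → ℝ := fun i => (s ∘ Tuple.sort s) i.rev

/-- The difference-of-means statistic `T(s)`. -/
def Tstat (q : ℕ) (s : Fin (q + 2) → ℝ) : ℝ :=
  (s 0 + s 1) / 2 - (∑ k : Fin q, s ⟨k.val + 2, by have := k.isLt; omega⟩) / q

/-- The rearrangement test `φ(x, w) = 1{T(S(x,w)) = T(S(x,w)^▽)}`. -/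
def phiTest (q : ℕ) (x : Fin (q + 1) → ℝ) (w : ℝ) : ℝ :=
  if Tstat q (Svec q w x) = Tstat q (rearr (Svec q w x)) then 1 else 0

/-- The size bound `ξ_q(w, ρ)`. -/
def xiBound (q : ℕ) (w ρ : ℝ) : ℝ :=
  (1 / 2) ^ (q + 1)
    + (∫ y in Set.Ioi (0 : ℝ), (Phi ((1 - w) * ρ * y)) ^ (q - 1) * stdNormalPDF y)
    + sInf ((fun t : ℝ => Phi (Real.sqrt ((q : ℝ) - 1) * w * t) ^ (q - 1)
        + 2 * Phi (-(q : ℝ) * t)) '' Set.Ioi 0)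

/-- The lower bound on power from Proposition 1. -/
def powerBound (q : ℕ) (w δ σ : ℝ) (σs : Fin q → ℝ) : ℝ :=
  2 ^ q * sSup ((fun t : ℝ => Phi (δ / σ - ((1 + w) / (1 - w)) * t) *
      ∏ k : Fin q, (Phi ((σ / σs k) * t) - 1 / 2)) '' Set.Ici 0)

open scoped Topology

section Rearrangement

variable {q : ℕ}

theorem Tstat_eq_sum (s : Fin (q + 2) → ℝ) :
    Tstat q s = (s 0 + s 1) / 2 - ((∑ i, s i) - (s 0 + s 1)) / q := by
  have hsum : ∑ i, s i = s 0 + s 1 + ∑ k : Fin q, s k.succ.succ := by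
    simp only [Fin.sum_univ_succ, Fin.succ_zero_eq_one, add_assoc]
  rw [hsum, add_sub_cancel_left]
  rfl

theorem Tstat_eq_Tstat_iff {s t : Fin (q + 2) → ℝ} (hsum : ∑ i, s i = ∑ i, t i) :
    Tstat q s = Tstat q t ↔ s 0 + s 1 = t 0 + t 1 := by
  have hcoeff : (0 : ℝ) < 1 / 2 + 1 / q := by positivity
  rw [Tstat_eq_sum, Tstat_eq_sum, hsum]
  constructor
  · intro h
    refine mul_left_cancel₀ hcoeff.ne' ?_
    linear_combination h
  · intro h
    rw [h]

theorem exists_perm_rearr_eq_comp {n : ℕ} (s : Fin n → ℝ) :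
    ∃ π : Equiv.Perm (Fin n), rearr s = s ∘ π :=
  ⟨Fin.revPerm.trans (Tuple.sort s), rfl⟩

theorem antitone_rearr {n : ℕ} (s : Fin n → ℝ) : Antitone (rearr s) := fun _ _ hij =>
  Tuple.monotone_sort s (Fin.rev_le_rev.mpr hij)

theorem sum_rearr {n : ℕ} (s : Fin n → ℝ) : ∑ i, rearr s i = ∑ i, s i := by
  obtain ⟨π, hπ⟩ := exists_perm_rearr_eq_comp s
  rw [hπ]
  exact Equiv.sum_comp π s

theorem add_le_apply_zero_add_apply_one {s : Fin (q + 2) → ℝ}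
    (hs : ∀ k : Fin q, s k.succ.succ ≤ min (s 0) (s 1)) {i j : Fin (q + 2)} (hij : i ≠ j) :
    s i + s j ≤ s 0 + s 1 := by
  have h0 (k : Fin q) : s k.succ.succ ≤ s 0 := (hs k).trans (min_le_left _ _)
  have h1 (k : Fin q) : s k.succ.succ ≤ s 1 := (hs k).trans (min_le_right _ _)
  have hcases (i : Fin (q + 2)) : i = 0 ∨ i = 1 ∨ ∃ k : Fin q, i = k.succ.succ := by
    induction i using Fin.cases with
    | zero => simp
    | succ i => induction i using Fin.cases <;> simp
  obtain rfl | rfl | ⟨k, rfl⟩ := hcases i <;> obtain rfl | rfl | ⟨l, rfl⟩ := hcases j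
  · exact absurd rfl hij
  · rfl
  · linarith [h1 l]
  · rw [add_comm]
  · exact absurd rfl hij
  · linarith [h0 l]
  · linarith [h1 k]
  · linarith [h0 k]
  · linarith [h0 k, h1 l]

theorem Tstat_eq_Tstat_rearr_iff (s : Fin (q + 2) → ℝ) :
    Tstat q s = Tstat q (rearr s) ↔ ∀ i j, i ≠ j → s i + s j ≤ s 0 + s 1 := by
  rw [Tstat_eq_Tstat_iff (sum_rearr s).symm]
  obtain ⟨π, hπ⟩ := exists_perm_rearr_eq_comp s
  have hrearr (i) : rearr s i = s (π i) := congrFun hπ i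
  have hmax {i j : Fin (q + 2)} (hij : i ≠ j) : s i + s j ≤ rearr s 0 + rearr s 1 := by
    have hdom (k : Fin q) : rearr s k.succ.succ ≤ min (rearr s 0) (rearr s 1) :=
      le_min (antitone_rearr s (Fin.zero_le _))
        (antitone_rearr s (Fin.succ_le_succ_iff.mpr (Fin.zero_le _)))
    simpa only [hrearr, π.apply_symm_apply] using
      add_le_apply_zero_add_apply_one hdom (π.symm.injective.ne hij)
  constructor
  · intro h i j hij
    exact h ▸ hmax hij
  · intro h
    refine le_antisymm (hmax (by simp)) ?_
    rw [hrearr, hrearr]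
    exact h _ _ (π.injective.ne (by simp))

end Rearrangement

section RejectionRegion

variable (q : ℕ) (w : ℝ)

/-- The rejection region `{x | φ(x, w) = 1}` of the rearrangement test. -/
def rejectionRegion : Set (Fin (q + 1) → ℝ) :=
  {x | Tstat q (Svec q w x) = Tstat q (rearr (Svec q w x))}

theorem phiTest_eq_indicator (x : Fin (q + 1) → ℝ) :
    phiTest q x w = (rejectionRegion q w).indicator 1 x := by
  simp only [phiTest, indicator_apply, rejectionRegion, mem_ofPred_eq, Pi.one_apply]

variable {q w} in
theorem mem_rejectionRegion_iff {x : Fin (q + 1) → ℝ} :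
    x ∈ rejectionRegion q w ↔
      ∀ i j, i ≠ j → Svec q w x i + Svec q w x j ≤ Svec q w x 0 + Svec q w x 1 :=
  Tstat_eq_Tstat_rearr_iff _

@[fun_prop]
theorem continuous_Svec : Continuous (Svec q w) := by
  refine continuous_pi fun j => ?_
  unfold Svec xbar
  split_ifs <;> fun_prop

theorem isClosed_rejectionRegion : IsClosed (rejectionRegion q w) := by
  have hinter : rejectionRegion q w = ⋂ (i) (j) (_ : i ≠ j),
      {x | Svec q w x i + Svec q w x j ≤ Svec q w x 0 + Svec q w x 1} := by
    ext x
    simp only [mem_rejectionRegion_iff, mem_iInter, mem_ofPred_eq]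
  rw [hinter]
  exact isClosed_iInter fun i => isClosed_iInter fun j => isClosed_iInter fun _ =>
    isClosed_le (by fun_prop) (by fun_prop)

theorem integral_phiTest {Ω : Type*} [MeasurableSpace Ω] {P : Measure Ω}
    {X : Ω → Fin (q + 1) → ℝ} (hX : AEMeasurable X P) :
    ∫ ω, phiTest q (X ω) w ∂P = P.real (X ⁻¹' rejectionRegion q w) := by
  have hmeas := (isClosed_rejectionRegion q w).measurableSet
  simp only [phiTest_eq_indicator]
  rw [← integral_map hX (measurable_one.indicator hmeas).aestronglyMeasurable,
    integral_indicator_one hmeas, map_measureReal_apply_of_aemeasurable hX hmeas]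

variable {q w}

theorem rejectionRegion_mem_nhds {θ : Fin (q + 1) → ℝ}
    (hθ : ∀ k : Fin q, Svec q w θ k.succ.succ < min (Svec q w θ 0) (Svec q w θ 1)) :
    rejectionRegion q w ∈ 𝓝 θ := by
  have hdominate : ∀ᶠ x in 𝓝 θ, ∀ k : Fin q,
      Svec q w x k.succ.succ < min (Svec q w x 0) (Svec q w x 1) :=
    eventually_all.mpr fun k =>
      ContinuousAt.eventually_lt (by fun_prop) (by fun_prop) (hθ k)
  filter_upwards [hdominate] with x hx
  exact mem_rejectionRegion_iff.mpr fun i j => add_le_apply_zero_add_apply_one fun k => (hx k).le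

theorem Svec_cons_const_lt (hw : w ∈ Ioo (-1) 1) {θ1 θ0 : ℝ} (hθ : θ0 < θ1) (k : Fin q) :
    Svec q w (Fin.cons θ1 fun _ => θ0) k.succ.succ <
      min (Svec q w (Fin.cons θ1 fun _ => θ0) 0) (Svec q w (Fin.cons θ1 fun _ => θ0) 1) := by
  have hxbar : xbar q (Fin.cons θ1 fun _ => θ0) = θ0 := by
    have hq : (q : ℝ) ≠ 0 := Nat.cast_ne_zero.mpr k.pos.ne'
    simp [xbar, hq]
  have hcontrol : Svec q w (Fin.cons θ1 fun _ => θ0) k.succ.succ = 0 := by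
    change (Fin.cons θ1 fun _ => θ0 : Fin (q + 1) → ℝ) k.succ - xbar q _ = 0
    rw [hxbar, Fin.cons_succ, sub_self]
  have hgap : 0 < θ1 - θ0 := sub_pos.mpr hθ
  rw [hcontrol, lt_min_iff]
  simp only [Svec, hxbar, Fin.cons_zero, Fin.val_zero, Fin.val_one, one_ne_zero, if_true, if_false]
  exact ⟨mul_pos (by linarith [hw.1]) hgap, mul_pos (by linarith [hw.2]) hgap⟩

end RejectionRegion

section Convergence

variable {ι Ω Ω' E : Type*} {l : Filter ι} [MeasurableSpace Ω] [MeasurableSpace Ω']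
  {P : Measure Ω} {P' : Measure Ω'}

theorem tendstoInMeasure_const_of_tendsto [PseudoEMetricSpace E] {a : ι → E} {c : E}
    (ha : Tendsto a l (𝓝 c)) : TendstoInMeasure P (fun i _ => a i) l fun _ => c := by
  intro ε hε
  refine tendsto_const_nhds.congr' ?_
  filter_upwards [ha (Metric.eball_mem_nhds c hε)] with i (hi : edist (a i) c < ε)
  simp [hi.not_ge]

variable [IsProbabilityMeasure P]

theorem tendsto_measureReal_preimage_of_tendstoInMeasure_const [PseudoEMetricSpace E]
    {X : ι → Ω → E} {c : E} (hX : TendstoInMeasure P X l fun _ => c) {A : Set E} (hA : A ∈ 𝓝 c) :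
    Tendsto (fun i => P.real (X i ⁻¹' A)) l (𝓝 1) := by
  obtain ⟨ε, hε, hball⟩ := EMetric.mem_nhds_iff.mp hA
  have hfar : Tendsto (fun i => P.real {ω | ε ≤ edist (X i ω) c}) l (𝓝 0) :=
    (ENNReal.tendsto_toReal_zero_iff fun _ => measure_ne_top P _).mpr (hX ε hε)
  have hcover (i) : X i ⁻¹' A ∪ {ω | ε ≤ edist (X i ω) c} = univ :=
    eq_univ_of_forall fun ω => (lt_or_ge (edist (X i ω) c) ε).imp (fun h => hball h) id
  have hlower (i) : 1 - P.real {ω | ε ≤ edist (X i ω) c} ≤ P.real (X i ⁻¹' A) := by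
    have hunion := measureReal_union_le (μ := P) (X i ⁻¹' A) {ω | ε ≤ edist (X i ω) c}
    rw [hcover, probReal_univ] at hunion
    linarith
  exact tendsto_of_tendsto_of_tendsto_of_le_of_le (by simpa using hfar.const_sub 1)
    tendsto_const_nhds hlower fun _ => measureReal_le_one

variable [IsProbabilityMeasure P'] [MeasurableSpace E]

theorem tendstoInMeasure_of_tendstoInDistribution_const [PseudoEMetricSpace E]
    [OpensMeasurableSpace E] {X : ι → Ω → E} {c : E}
    (hX : TendstoInDistribution X l (fun _ : Ω' => c) (fun _ => P) P') :
    TendstoInMeasure P X l fun _ => c := by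
  intro ε hε
  set F : Set E := {x | ε ≤ edist x c}
  have hF : IsClosed F := isClosed_le continuous_const (by fun_prop)
  have hcF : c ∉ F := by simpa [F] using hε.ne'
  have hlimit : (P'.map fun _ => c) F = 0 := by
    rw [Measure.map_apply measurable_const hF.measurableSet]
    simp [hcF]
  have hF_portmanteau := ProbabilityMeasure.tendsto_measure_of_null_frontier_of_tendsto' hX.tendsto
    (measure_mono_null hF.frontier_subset hlimit)
  simp only [ProbabilityMeasure.coe_mk, hlimit,
    Measure.map_apply_of_aemeasurable (hX.forall_aemeasurable _) hF.measurableSet] at hF_portmanteau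
  exact hF_portmanteau

theorem tendstoInDistribution_id_of_forall_integral_tendsto [TopologicalSpace E]
    [OpensMeasurableSpace E] {X : ι → Ω → E} (hX : ∀ i, AEMeasurable (X i) P)
    {ν : Measure E} [IsProbabilityMeasure ν]
    (h : ∀ f : BoundedContinuousFunction E ℝ,
      Tendsto (fun i => ∫ ω, f (X i ω) ∂P) l (𝓝 (∫ x, f x ∂ν))) :
    TendstoInDistribution X l id (fun _ => P) ν where
  forall_aemeasurable := hX
  tendsto := by
    refine ProbabilityMeasure.tendsto_iff_forall_integral_tendsto.mpr fun f => ?_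
    simpa only [ProbabilityMeasure.coe_mk, Measure.map_id,
      integral_map (hX _) f.continuous.aestronglyMeasurable] using h f

theorem tendstoInMeasure_of_tendstoInDistribution_smul_sub
    [SeminormedAddCommGroup E] [NormedSpace ℝ E] [SecondCountableTopology E] [BorelSpace E]
    [l.IsCountablyGenerated] {X : ι → Ω → E} {c : E} {r : ι → ℝ} (hr : Tendsto r l atTop)
    {Z : Ω' → E} (h : TendstoInDistribution (fun i ω => r i • (X i ω - c)) l Z (fun _ => P) P') :
    TendstoInMeasure P X l fun _ => c := by
  have hinv : TendstoInMeasure P (fun i (_ : Ω) => (r i)⁻¹) l fun _ => (0 : ℝ) :=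
    tendstoInMeasure_const_of_tendsto hr.inv_tendsto_atTop
  have hslutsky := h.continuous_comp_prodMk_of_tendstoInMeasure_const
    (g := fun p : E × ℝ => p.2 • p.1 + c) (by fun_prop) hinv fun _ => aemeasurable_const
  simp only [zero_smul, zero_add] at hslutsky
  refine (tendstoInMeasure_of_tendstoInDistribution_const hslutsky).congr' ?_ .rfl
  filter_upwards [hr.eventually_ne_atTop 0] with i hi
  simp [smul_smul, hi]

end Convergence

theorem statement16_general {ι Ω : Type*} {l : Filter ι} [MeasurableSpace Ω] (P : Measure Ω)
    [IsProbabilityMeasure P] (q : ℕ) (θhat : ι → Ω → Fin (q + 1) → ℝ)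
    (hmeas : ∀ i, AEMeasurable (θhat i) P) (θ : Fin (q + 1) → ℝ)
    (hconsistent : TendstoInMeasure P θhat l fun _ => θ) (w : ℝ)
    (hθ : ∀ k : Fin q, Svec q w θ k.succ.succ < min (Svec q w θ 0) (Svec q w θ 1)) :
    Tendsto (fun i => ∫ ω, phiTest q (θhat i ω) w ∂P) l (𝓝 1) := by
  simp only [integral_phiTest q w (hmeas _)]
  exact tendsto_measureReal_preimage_of_tendstoInMeasure_const hconsistent
    (rejectionRegion_mem_nhds hθ)

/-- Theorem 2, consistency against fixed alternatives. -/
theorem statement16 {Ω : Type*} [MeasurableSpace Ω] (P : Measure Ω) [IsProbabilityMeasure P]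
    (q : ℕ) (hq : 2 ≤ q)
    (θhat : ℕ → Ω → Fin (q + 1) → ℝ) (hmeas : ∀ n, Measurable (θhat n))
    (θ1 θ0 : ℝ) (hθ : θ1 > θ0)
    (σ : ℝ) (hσ : 0 < σ) (σs : Fin q → ℝ) (hσs : ∀ k, 0 ≤ σs k)
    (hone : ∀ j k : Fin q, σs j = 0 → σs k = 0 → j = k)
    (hconv : ∀ f : BoundedContinuousFunction (Fin (q + 1) → ℝ) ℝ,
      Tendsto (fun n : ℕ => ∫ ω, f (fun i =>
          Real.sqrt n * (θhat n ω i - (Fin.cons θ1 (fun _ => θ0) : Fin (q + 1) → ℝ) i)) ∂P)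
        atTop
        (nhds (∫ x, f x ∂(Measure.pi (fun i : Fin (q + 1) =>
          gaussianReal 0
            ((Fin.cons (σ ^ 2) (fun k => (σs k) ^ 2) : Fin (q + 1) → ℝ) i).toNNReal)))))
    (w : ℝ) (hw : w ∈ Set.Ioo (0 : ℝ) 1) :
    Tendsto (fun n : ℕ => ∫ ω, phiTest q (θhat n ω) w ∂P) atTop (nhds 1) := by
  have hscaled := tendstoInDistribution_id_of_forall_integral_tendsto
    (fun n => Measurable.aemeasurable (by have := hmeas n; fun_prop)) hconv
  exact statement16_general P q θhat (fun n => (hmeas n).aemeasurable) _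
    (tendstoInMeasure_of_tendstoInDistribution_smul_sub
      (Real.tendsto_sqrt_atTop.comp tendsto_natCast_atTop_atTop) hscaled)
    w (Svec_cons_const_lt ⟨by linarith [hw.1], hw.2⟩ hθ)

end
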